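/- Let Ω2 be the ℤ-span in Λ of the eight elements α−γ, β−δ, e_1−g_1, e_3−g_3, f_1−h_1, f_2−h_2, f_3−h_3, f_4−h_4. Then Ω2 is isometric to E8(2) (the negative definite even unimodular lattice E8 with its bilinear form multiplied by 2), and Ω2 equals the orthogonal complement in Λ of the invariant lattice Λ^{τ²} = {x ∈ Λ : τ²(x) = x} of the involution τ². -/

import Mathlib

/-!
The involution `τ²` permutes the coordinates of the ambient space: it exchanges the first copy of
`D4` with the third and the second with the fourth, and fixes everything else. It is an isometry of
a nondegenerate form, so the orthogonal complement of `Λ^{τ²}` in `Λ` is the anti-invariant lattice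
`{x ∈ Λ : τ² x = -x}` (`mem_ortho_iff`). The given generators of `Ω₂` are anti-invariant.

Conversely, `Ω₂` contains eight vectors `rootV` whose Gram matrix is `2 • e8mat` (`rootV_gram`), and
there are eight linear forms, the rows of `coordM`, that take integral values on all of `Λ`
(`coord_integral`) and recover every anti-invariant vector as the combination of `rootV` with these
values as coefficients (`expand`). Hence anti-invariant lattice `⊆ span rootV ⊆ Ω₂ ⊆` anti-invariant
lattice. All three coincide, and `rootV` is a `ℤ`-basis of `Ω₂` realizing the isometry with `E8(2)`.
The finite verifications on matrices with rational entries are evaluated by the kernel.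
-/

noncomputable section
open Matrix

namespace K3Paper

/-! ### Generic lattice machinery over ℚ-ambient spaces -/

abbrev Amb (n : ℕ) := Fin n → ℚ

/-- bilinear form attached to a Gram matrix -/
def bq {n : ℕ} (G : Matrix (Fin n) (Fin n) ℚ) (x y : Amb n) : ℚ := x ⬝ᵥ (G *ᵥ y)

/-- the form, as a ℤ-linear map in the first variable (second variable fixed) -/
def bqL {n : ℕ} (G : Matrix (Fin n) (Fin n) ℚ) (y : Amb n) : Amb n →ₗ[ℤ] ℚ where
  toFun x := bq G x y
  map_add' x x' := by simp [bq, add_dotProduct]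
  map_smul' k x := by
    show (k • x) ⬝ᵥ (G *ᵥ y) = k • (x ⬝ᵥ (G *ᵥ y))
    exact smul_dotProduct k x (G *ᵥ y)

/-- the image of ℤ inside ℚ, as a ℤ-submodule -/
def intQ : Submodule ℤ ℚ := LinearMap.range (Algebra.linearMap ℤ ℚ)

/-- the dual lattice of the ℤ-span of `T` (inside the ℚ-span of `T`) -/
def dualLat {n : ℕ} (G : Matrix (Fin n) (Fin n) ℚ) (T : Set (Amb n)) : Submodule ℤ (Amb n) :=
  (Submodule.span ℚ T).restrictScalars ℤ ⊓ ⨅ y ∈ T, Submodule.comap (bqL G y) intQ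

/-- the discriminant group `A_S = S^*/S` of the ℤ-span of `T` -/
abbrev disc {n : ℕ} (G : Matrix (Fin n) (Fin n) ℚ) (T : Set (Amb n)) :=
  ↥(dualLat G T) ⧸ (Submodule.span ℤ T).comap (dualLat G T).subtype

/-- class of a dual vector in the discriminant group -/
def discMk {n : ℕ} (G : Matrix (Fin n) (Fin n) ℚ) (T : Set (Amb n))
    (x : ↥(dualLat G T)) : disc G T := Submodule.Quotient.mk x

/-- the orthogonal complement of `T` inside the lattice `A` -/
def orthoIn {n : ℕ} (G : Matrix (Fin n) (Fin n) ℚ) (A : Submodule ℤ (Amb n))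
    (T : Set (Amb n)) : Submodule ℤ (Amb n) :=
  A ⊓ ⨅ y ∈ T, LinearMap.ker (bqL G y)

def IsIntegral {n : ℕ} (G : Matrix (Fin n) (Fin n) ℚ) (A : Set (Amb n)) : Prop :=
  ∀ x ∈ A, ∀ y ∈ A, ∃ k : ℤ, bq G x y = k

def IsEven {n : ℕ} (G : Matrix (Fin n) (Fin n) ℚ) (A : Set (Amb n)) : Prop :=
  ∀ x ∈ A, ∃ k : ℤ, bq G x x = 2 * k

def NegDef {n : ℕ} (G : Matrix (Fin n) (Fin n) ℚ) (A : Set (Amb n)) : Prop :=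
  ∀ x ∈ A, x ≠ 0 → bq G x x < 0

/-- the quotient group `B/A` of a pair of lattices -/
abbrev quotBy {n : ℕ} (A B : Submodule ℤ (Amb n)) := ↥B ⧸ Submodule.comap B.subtype A

/-- the index of `A` in `B` -/
def subIndex {n : ℕ} (A B : Submodule ℤ (Amb n)) : ℕ := Nat.card (quotBy A B)

/-- `A` is a primitive sublattice of `Q` (the quotient is torsion-free) -/
def PrimIn {n : ℕ} (A Q : Submodule ℤ (Amb n)) : Prop :=
  ∀ x ∈ Q, ∀ k : ℤ, k ≠ 0 → k • x ∈ A → x ∈ A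

/-- isometry between two lattices, possibly in different ambient spaces -/
def LatIsom {n₁ n₂ : ℕ} (G₁ : Matrix (Fin n₁) (Fin n₁) ℚ) (S₁ : Submodule ℤ (Amb n₁))
    (G₂ : Matrix (Fin n₂) (Fin n₂) ℚ) (S₂ : Submodule ℤ (Amb n₂)) : Prop :=
  ∃ φ : ↥S₁ ≃ₗ[ℤ] ↥S₂, ∀ x y : ↥S₁, bq G₁ ↑x ↑y = bq G₂ ↑(φ x) ↑(φ y)

/-! integral-coordinate lattices -/

/-- bilinear form of an integral Gram matrix on `ℤ^n` -/
def bz {n : ℕ} (H : Matrix (Fin n) (Fin n) ℤ) (x y : Fin n → ℤ) : ℤ := x ⬝ᵥ (H *ᵥ y)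

/-- isometry from a ℚ-ambient lattice onto all of `ℤ^m` with Gram matrix `H` -/
def LatIsomToZ {n m : ℕ} (G : Matrix (Fin n) (Fin n) ℚ) (S : Submodule ℤ (Amb n))
    (H : Matrix (Fin m) (Fin m) ℤ) : Prop :=
  ∃ φ : ↥S ≃ₗ[ℤ] (Fin m → ℤ), ∀ x y : ↥S, bq G ↑x ↑y = ((bz H (φ x) (φ y) : ℤ) : ℚ)

/-- `φ` is a primitive, form-preserving embedding of the lattice `S` into `ℤ^m`
with Gram matrix `H` -/
def IsPrimEmb {n m : ℕ} (G : Matrix (Fin n) (Fin n) ℚ) (S : Submodule ℤ (Amb n))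
    (H : Matrix (Fin m) (Fin m) ℤ) (φ : ↥S →ₗ[ℤ] (Fin m → ℤ)) : Prop :=
  Function.Injective φ ∧ (∀ x y : ↥S, bq G ↑x ↑y = ((bz H (φ x) (φ y) : ℤ) : ℚ)) ∧
    ∀ (v : Fin m → ℤ) (k : ℤ), k ≠ 0 → k • v ∈ LinearMap.range φ → v ∈ LinearMap.range φ

/-- isometry of `ℤ^m` with Gram matrix `H` -/
def IsIsomZ {m : ℕ} (H : Matrix (Fin m) (Fin m) ℤ) (θ : (Fin m → ℤ) ≃ₗ[ℤ] (Fin m → ℤ)) : Prop :=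
  ∀ x y, bz H (θ x) (θ y) = bz H x y

/-- the standard lattice `ℤ^n ⊆ ℚ^n` -/
def stdLat (n : ℕ) : Submodule ℤ (Amb n) :=
  Submodule.span ℤ (Set.range fun i => (Pi.single i 1 : Amb n))

/-- minimal number of generators of the discriminant group -/
def latLen {n : ℕ} (G : Matrix (Fin n) (Fin n) ℚ) (T : Set (Amb n)) : ℕ :=
  sInf {k | ∃ f : Fin k → disc G T, Submodule.span ℤ (Set.range f) = ⊤}

/-- extending the ambient space by one coordinate of square `c`, orthogonal to the rest -/
def extGram {n : ℕ} (G : Matrix (Fin n) (Fin n) ℚ) (c : ℚ) :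
    Matrix (Fin (n+1)) (Fin (n+1)) ℚ :=
  Matrix.of fun i j =>
    if hi : (i : ℕ) < n then
      if hj : (j : ℕ) < n then G ⟨i, hi⟩ ⟨j, hj⟩ else 0
    else if (j : ℕ) < n then 0 else c

/-- extending a vector by a zero coordinate -/
def extV {n : ℕ} (x : Amb n) : Amb (n+1) :=
  fun k => if h : (k : ℕ) < n then x ⟨k, h⟩ else 0

/-- the added last basis vector -/
def lastV (n : ℕ) : Amb (n+1) := Pi.single (Fin.last n) 1



/-! ### The lattice `W` and the K3 lattice `Λ` -/

/-- entries of the Gram matrix of `W = D4⁴ ⊕ A1² ⊕ ⟨-4⟩ ⊕ ⟨4⟩ ⊕ ⟨2⟩ ⊕ ⟨2⟩` -/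
def gramWent (i j : ℕ) : ℚ :=
  if i < 16 ∧ j < 16 then
    if i / 4 = j / 4 then
      if i = j then -2 else if i % 4 = 2 ∨ j % 4 = 2 then 1 else 0
    else 0
  else if i = j then
    if i < 18 then -2 else if i = 18 then -4 else if i = 19 then 4 else 2
  else 0

def gramW : Matrix (Fin 22) (Fin 22) ℚ := Matrix.of fun i j => gramWent i j

/-- standard basis vectors of the 22-dimensional ambient space -/
def sb (i : Fin 22) : Amb 22 := Pi.single i 1

def eW (i : Fin 4) : Amb 22 := sb ⟨i.1, by have := i.isLt; omega⟩
def fW (i : Fin 4) : Amb 22 := sb ⟨i.1 + 4, by have := i.isLt; omega⟩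
def gW (i : Fin 4) : Amb 22 := sb ⟨i.1 + 8, by have := i.isLt; omega⟩
def hW (i : Fin 4) : Amb 22 := sb ⟨i.1 + 12, by have := i.isLt; omega⟩
def a1V : Amb 22 := sb 16
def a2V : Amb 22 := sb 17
def sgV : Amb 22 := sb 18
def rhV : Amb 22 := sb 19
def om1V : Amb 22 := sb 20
def om2V : Amb 22 := sb 21

def chiV : Amb 22 := (2:ℚ)⁻¹ • (rhV + sgV)
def alV : Amb 22 := (4:ℚ)⁻¹ • (rhV + sgV) + (2:ℚ)⁻¹ • (eW 0 + eW 1 + fW 0 + fW 3)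
def beV : Amb 22 := (4:ℚ)⁻¹ • (rhV - sgV) + (2:ℚ)⁻¹ • (fW 0 + fW 1 + gW 0 + gW 3)
def gaV : Amb 22 := (4:ℚ)⁻¹ • (rhV + sgV) + (2:ℚ)⁻¹ • (gW 0 + gW 1 + hW 0 + hW 3)
def deV : Amb 22 := (4:ℚ)⁻¹ • (rhV - sgV) + (2:ℚ)⁻¹ • (hW 0 + hW 1 + eW 0 + eW 3)
def epV : Amb 22 := (2:ℚ)⁻¹ • (rhV + fW 1 + fW 3 + hW 1 + hW 3 + a1V + a2V)
def zeV : Amb 22 := (2:ℚ)⁻¹ • (eW 0 + fW 0 + eW 3 + fW 1 + a1V + om1V)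
def etV : Amb 22 := (2:ℚ)⁻¹ • (eW 0 + fW 0 + eW 3 + fW 1 + a2V + om2V)

/-- the K3 lattice `Λ`, as an overlattice of `W` -/
def Lam : Submodule ℤ (Amb 22) :=
  Submodule.span ℤ (Set.range sb ∪ {chiV, alV, beV, gaV, deV, epV, zeV, etV})

/-! ### The order-4 isometry `τ` -/

def tauEnt (k j : ℕ) : ℚ :=
  if k < 4 then (if j = k + 12 then 1 else 0)
  else if k < 16 then (if j = k - 4 then 1 else 0)
  else if k = 16 then (if j = 17 then 1 else 0)
  else if k = 17 then (if j = 16 then 1 else 0)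
  else if k = 18 then (if j = 18 then -1 else 0)
  else (if j = k then 1 else 0)

def tauMat : Matrix (Fin 22) (Fin 22) ℚ := Matrix.of fun k j => tauEnt k j

/-- the isometry `τ` (as a linear endomorphism of the ambient space) -/
def tauL : Amb 22 →ₗ[ℚ] Amb 22 := tauMat.mulVecLin

/-- the invariant lattice `Λ^τ` -/
def FixTau : Submodule ℤ (Amb 22) :=
  Lam ⊓ (LinearMap.ker (tauL - LinearMap.id)).restrictScalars ℤ

/-- the invariant lattice `Λ^{τ²}` -/
def FixTau2 : Submodule ℤ (Amb 22) :=
  Lam ⊓ (LinearMap.ker (tauL ∘ₗ tauL - LinearMap.id)).restrictScalars ℤ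

/-- the coinvariant lattice `Ω₄ = (Λ^τ)^⊥ ∩ Λ` -/
def Om4 : Submodule ℤ (Amb 22) := orthoIn gramW Lam ↑FixTau

/-- `Ω₂`, spanned by the listed eight elements -/
def Om2 : Submodule ℤ (Amb 22) :=
  Submodule.span ℤ {alV - gaV, beV - deV, eW 0 - gW 0, eW 2 - gW 2,
    fW 0 - hW 0, fW 1 - hW 1, fW 2 - hW 2, fW 3 - hW 3}

/-- `R`, the orthogonal complement of `Ω₂` in `Ω₄` -/
def Rlat : Submodule ℤ (Amb 22) := orthoIn gramW Om4 ↑Om2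

/-! ### The K3 lattice in its standard integral form -/

/-- negative definite `E8` Gram matrix entries (Bourbaki numbering of the Dynkin diagram) -/
def e8ent (i j : ℕ) : ℤ :=
  if i = j then -2
  else if (i, j) ∈ ([(0,2),(2,0),(1,3),(3,1),(2,3),(3,2),(3,4),(4,3),
      (4,5),(5,4),(5,6),(6,5),(6,7),(7,6)] : List (ℕ × ℕ)) then 1
  else 0

def e8mat : Matrix (Fin 8) (Fin 8) ℤ := Matrix.of fun i j => e8ent i.1 j.1

/-- Gram matrix of `Λ_K3 = E8² ⊕ U³` -/
def k3ent (i j : ℕ) : ℤ :=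
  if i < 8 ∧ j < 8 then e8ent i j
  else if 8 ≤ i ∧ i < 16 ∧ 8 ≤ j ∧ j < 16 then e8ent (i - 8) (j - 8)
  else if 16 ≤ i ∧ i < 22 ∧ 16 ≤ j ∧ j < 22 ∧ (i - 16) / 2 = (j - 16) / 2 then
    (if i = j then 0 else 1)
  else 0

def gramK3 : Matrix (Fin 22) (Fin 22) ℤ := Matrix.of fun i j => k3ent i.1 j.1

/-! ### The exceptional lattice `M` -/

/-- Gram matrix of `A3⁴ ⊕ A1²` -/
def gramMent (i j : ℕ) : ℚ :=
  if i < 12 ∧ j < 12 ∧ i / 3 = j / 3 then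
    (if i = j then -2 else if i + 1 = j ∨ j + 1 = i then 1 else 0)
  else if i = j then -2 else 0

def gramM : Matrix (Fin 14) (Fin 14) ℚ := Matrix.of fun i j => gramMent i.1 j.1

def mb (i : Fin 14) : Amb 14 := Pi.single i 1

/-- the glue vector `μ` -/
def muM : Amb 14 :=
  (4:ℚ)⁻¹ • ((mb 0 + (2:ℚ) • mb 1 + (3:ℚ) • mb 2) + (mb 3 + (2:ℚ) • mb 4 + (3:ℚ) • mb 5)
    + (mb 6 + (2:ℚ) • mb 7 + (3:ℚ) • mb 8) + (mb 9 + (2:ℚ) • mb 10 + (3:ℚ) • mb 11))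
  + (2:ℚ)⁻¹ • (mb 12 + mb 13)

/-- the exceptional lattice `M = M_{ℤ/4ℤ}` -/
def Mlat : Submodule ℤ (Amb 14) := Submodule.span ℤ (Set.range mb ∪ {muM})

/-! ### The Nikulin lattice `N` -/

def gramN8 : Matrix (Fin 8) (Fin 8) ℚ := Matrix.diagonal fun _ => -2

def nb (i : Fin 8) : Amb 8 := Pi.single i 1

def nuN : Amb 8 := (2:ℚ)⁻¹ • (∑ i : Fin 8, nb i)

/-- the Nikulin lattice -/
def Nlat : Submodule ℤ (Amb 8) := Submodule.span ℤ (Set.range nb ∪ {nuN})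

/-! ### The ambient space for `Γ`: `Ŵ ⊕ A1⁸` (coordinates 0–13 for `Ŵ`, 14–21 Nikulin) -/

def gamEnt (i j : ℕ) : ℚ :=
  if i < 8 ∧ j < 8 then
    (if i / 4 = j / 4 then (if i = j then -2 else if i % 4 = 2 ∨ j % 4 = 2 then 1 else 0) else 0)
  else if i = j then
    (if i < 10 then -4 else if i = 10 then -8 else if i = 11 then 8
     else if i < 14 then 4 else -2)
  else 0

def gramGam : Matrix (Fin 22) (Fin 22) ℚ := Matrix.of fun i j => gamEnt i.1 j.1

/-- the projection `π : W ⊗ ℚ → Ŵ ⊗ ℚ` (realized inside the `Γ`-ambient space) -/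
def piEnt (k j : ℕ) : ℚ :=
  if k < 8 then (if j = k ∨ j = k + 8 then 1 else 0)
  else if k < 14 then (if j = k + 8 then 1 else 0)
  else 0

def piMat : Matrix (Fin 22) (Fin 22) ℚ := Matrix.of fun k j => piEnt k.1 j.1

def piL : Amb 22 →ₗ[ℚ] Amb 22 := piMat.mulVecLin

/-- `R̂ = π(Ω₄)` -/
def Rhat : Submodule ℤ (Amb 22) := Submodule.map (piL.restrictScalars ℤ) Om4

/-- the Nikulin curves inside the `Γ`-ambient space (coordinates 14,…,21) -/
def nG (i : Fin 8) : Amb 22 := sb ⟨14 + i.1, by have := i.isLt; omega⟩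

def nuG : Amb 22 := (2:ℚ)⁻¹ • (∑ i : Fin 8, nG i)

/-- the copy of the Nikulin lattice inside the `Γ`-ambient space -/
def NlatG : Submodule ℤ (Amb 22) := Submodule.span ℤ (Set.range nG ∪ {nuG})

/-- `x₁ = (n₃+n₄+n₅+n₈+σ̂)/2` -/
def x1G : Amb 22 := (2:ℚ)⁻¹ • (nG 2 + nG 3 + nG 4 + nG 7 + sb 10)

/-- `x₂ = (n₃+n₄+(ê₁−f̂₁)+(ê₄−f̂₄))/2 + (â₁−â₂+σ̂)/4` -/
def x2G : Amb 22 :=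
  (2:ℚ)⁻¹ • (nG 2 + nG 3 + (sb 0 - sb 4) + (sb 3 - sb 7)) + (4:ℚ)⁻¹ • (sb 8 - sb 9 + sb 10)

/-- the lattice `Γ` -/
def GamLat : Submodule ℤ (Amb 22) :=
  Submodule.span ℤ ((Rhat : Set (Amb 22)) ∪ (NlatG : Set (Amb 22)) ∪ {x1G, x2G})


/-! ### further generic notions -/

/-- `Q` is an overlattice of `A ⊕ B` (inside `(A ⊕ B) ⊗ ℚ`) which is an even integral
lattice and in which both `A` and `B` are primitive. -/
def OverCond {n : ℕ} (G : Matrix (Fin n) (Fin n) ℚ) (A B Q : Submodule ℤ (Amb n)) : Prop :=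
  A ⊔ B ≤ Q ∧
  Q ≤ (Submodule.span ℚ ((A ⊔ B : Submodule ℤ (Amb n)) : Set (Amb n))).restrictScalars ℤ ∧
  IsIntegral G ↑Q ∧ IsEven G ↑Q ∧ PrimIn A Q ∧ PrimIn B Q

/-- overlattice with quotient `ℤ/2ℤ` -/
def OvIdx2 {n : ℕ} (G : Matrix (Fin n) (Fin n) ℚ) (A B Q : Submodule ℤ (Amb n)) : Prop :=
  OverCond G A B Q ∧ subIndex (A ⊔ B) Q = 2

/-- overlattice with quotient `ℤ/4ℤ` -/
def OvIdx4 {n : ℕ} (G : Matrix (Fin n) (Fin n) ℚ) (A B Q : Submodule ℤ (Amb n)) : Prop :=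
  OverCond G A B Q ∧ subIndex (A ⊔ B) Q = 4 ∧ IsAddCyclic (quotBy (A ⊔ B) Q)

/-- the lattice `S` admits a primitive embedding into `ℤ^m` with Gram matrix `H`,
and any two such embeddings are conjugate by an isometry of the target. -/
def PrimEmbUnique {n m : ℕ} (G : Matrix (Fin n) (Fin n) ℚ) (S : Submodule ℤ (Amb n))
    (H : Matrix (Fin m) (Fin m) ℤ) : Prop :=
  (∃ φ, IsPrimEmb G S H φ) ∧
    ∀ φ ψ, IsPrimEmb G S H φ → IsPrimEmb G S H ψ →
      ∃ θ : (Fin m → ℤ) ≃ₗ[ℤ] (Fin m → ℤ), IsIsomZ H θ ∧ ∀ x, θ (φ x) = ψ x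

/-- compatibility of a function on the discriminant group with the discriminant
quadratic form (this characterizes the discriminant quadratic form). -/
def qCompat {n : ℕ} (G : Matrix (Fin n) (Fin n) ℚ) (T : Set (Amb n))
    (Qf : disc G T → AddCircle (2:ℚ)) : Prop :=
  ∀ x : ↥(dualLat G T), Qf (discMk G T x) = ((bq G ↑x ↑x : ℚ) : AddCircle (2:ℚ))

/-- two classes of the discriminant group are related by an isometry of the lattice
(an isometry of the ℤ-span of `T` is encoded as an ambient isometry preserving the span
of `T` and fixing its orthogonal complement pointwise). -/
def discRel {n : ℕ} (G : Matrix (Fin n) (Fin n) ℚ) (T : Set (Amb n))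
    (a b : disc G T) : Prop :=
  ∃ φ : Amb n ≃ₗ[ℚ] Amb n,
    (∀ x y, bq G (φ x) (φ y) = bq G x y) ∧
    (φ '' (Submodule.span ℤ T : Set (Amb n)) = (Submodule.span ℤ T : Set (Amb n))) ∧
    (∀ x, (∀ s ∈ T, bq G x s = 0) → φ x = x) ∧
    ∃ u v : ↥(dualLat G T), φ ↑u = (v : Amb n) ∧ a = discMk G T u ∧ b = discMk G T v

/-- two overlattices `Q`, `Q'` of `S ⊕ K` are isomorphic: there is an isometry of
`S ⊕ K` carrying `S` to `S` and `K` to `K` whose ℚ-linear extension carries `Q` to `Q'`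
(encoded as an ambient isometry, which is precisely such an extension). -/
def isoRelQ {n : ℕ} (G : Matrix (Fin n) (Fin n) ℚ) (S K : Submodule ℤ (Amb n))
    (Q Q' : Submodule ℤ (Amb n)) : Prop :=
  ∃ φ : Amb n ≃ₗ[ℚ] Amb n,
    (∀ x y, bq G (φ x) (φ y) = bq G x y) ∧
    φ '' (S : Set (Amb n)) = (S : Set (Amb n)) ∧
    φ '' (K : Set (Amb n)) = (K : Set (Amb n)) ∧
    φ '' (Q : Set (Amb n)) = (Q' : Set (Amb n))

/-- two elements of the dual lattice of `S` are in the same orbit of the discriminant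
group under the action induced by `O(S)`. -/
def orbRelEl {n : ℕ} (G : Matrix (Fin n) (Fin n) ℚ) (S : Submodule ℤ (Amb n))
    (u v : ↥(dualLat G (S : Set (Amb n)))) : Prop :=
  ∃ φ : Amb n ≃ₗ[ℚ] Amb n,
    (∀ x y, bq G (φ x) (φ y) = bq G x y) ∧
    φ '' (S : Set (Amb n)) = (S : Set (Amb n)) ∧
    (∀ x, (∀ s ∈ (S : Set (Amb n)), bq G x s = 0) → φ x = x) ∧
    φ ↑u - ↑v ∈ S



/-! ### The involution `τ²` as a permutation of coordinates -/

/-- The permutation of the coordinates induced by `τ²`: it exchanges the first copy of `D4` with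
the third one and the second with the fourth, and fixes the last six coordinates. -/
def sw (k : Fin 22) : Fin 22 :=
  if h : (k : ℕ) < 8 then ⟨k + 8, by omega⟩
  else if h' : (k : ℕ) < 16 then ⟨k - 8, by omega⟩ else k

lemma sw_invol : Function.Involutive sw := by
  have h : ∀ k, sw (sw k) = k := by decide +kernel
  exact h

lemma tau_sq (x : Amb 22) : tauL (tauL x) = x ∘ sw := by
  have h : tauMat * tauMat = Matrix.of fun k j => if sw k = j then (1 : ℚ) else 0 := by
    decide +kernel
  have h2 : tauL (tauL x) = (tauMat * tauMat) *ᵥ x := by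
    simp [tauL, Matrix.mulVec_mulVec]
  rw [h2, h]
  ext k
  simp [Matrix.mulVec, dotProduct]

lemma gramW_sw (i j : Fin 22) : gramW (sw i) (sw j) = gramW i j := by
  have h : gramW.submatrix sw sw = gramW := by decide +kernel
  exact congrFun (congrFun h i) j

lemma bq_eq_sum (x y : Amb 22) : bq gramW x y = ∑ i, ∑ j, x i * gramW i j * y j := by
  simp [bq, dotProduct, Matrix.mulVec, Finset.mul_sum, mul_assoc]

lemma bq_sw (x y : Amb 22) : bq gramW (x ∘ sw) (y ∘ sw) = bq gramW x y := by
  rw [bq_eq_sum, bq_eq_sum, ← Equiv.sum_comp sw_invol.toPerm]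
  refine Finset.sum_congr rfl fun i _ => ?_
  rw [← Equiv.sum_comp sw_invol.toPerm]
  refine Finset.sum_congr rfl fun j _ => ?_
  simp [gramW_sw, sw_invol i, sw_invol j]

lemma sb_sw : ∀ i : Fin 22, sb i ∘ sw = sb (sw i) := by
  intro i
  ext k
  revert i k
  decide +kernel

/-- The inverse of `gramW`, blockwise: its existence is the nondegeneracy of the form. -/
def gramWInv : Matrix (Fin 22) (Fin 22) ℚ := Matrix.of fun i j =>
  if (i : ℕ) < 16 ∧ (j : ℕ) < 16 then
    if (i : ℕ) / 4 = j / 4 then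
      if (i : ℕ) % 4 = 2 then (if (j : ℕ) % 4 = 2 then -2 else -1)
      else if (j : ℕ) % 4 = 2 then -1 else if i = j then -1 else -1/2
    else 0
  else if i = j then (gramW i i)⁻¹ else 0

lemma gramW_mul_inv : gramW * gramWInv = 1 := by decide +kernel

lemma eq_zero_of_bq_sb {x : Amb 22} (h : ∀ j, bq gramW x (sb j) = 0) : x = 0 := by
  have h1 : x ᵥ* gramW = 0 := by
    ext j
    have := h j
    rwa [bq, sb, Matrix.dotProduct_mulVec, dotProduct_single, mul_one] at this
  calc x = x ᵥ* (gramW * gramWInv) := by rw [gramW_mul_inv, Matrix.vecMul_one]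
    _ = 0 := by rw [← Matrix.vecMul_vecMul, h1, Matrix.zero_vecMul]

lemma mem_fixTau2 {y : Amb 22} : y ∈ FixTau2 ↔ y ∈ Lam ∧ y ∘ sw = y := by
  simp [FixTau2, tau_sq, sub_eq_zero]

lemma mem_orthoIn {x : Amb 22} :
    x ∈ orthoIn gramW Lam ↑FixTau2 ↔ x ∈ Lam ∧ ∀ y ∈ FixTau2, bq gramW x y = 0 := by
  simp only [orthoIn, Submodule.mem_inf, Submodule.mem_iInf, LinearMap.mem_ker, SetLike.mem_coe]
  rfl

lemma sb_mem_Lam (i : Fin 22) : sb i ∈ Lam :=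
  Submodule.subset_span (Or.inl ⟨i, rfl⟩)

/-- The orthogonal complement of `Λ^{τ²}` in `Λ` is the anti-invariant lattice of `τ²`. If `x` is
orthogonal to every `y + τ² y`, then `x + τ² x` is orthogonal to every `y`, hence zero. -/
lemma mem_ortho_iff {x : Amb 22} :
    x ∈ orthoIn gramW Lam ↑FixTau2 ↔ x ∈ Lam ∧ x ∘ sw = -x := by
  rw [mem_orthoIn]
  refine and_congr_right fun _ => ⟨fun h => ?_, fun h y hy => ?_⟩
  · refine eq_neg_of_add_eq_zero_left (eq_zero_of_bq_sb fun j => ?_)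
    have hfix : sb j + sb (sw j) ∈ FixTau2 := by
      refine mem_fixTau2.2 ⟨add_mem (sb_mem_Lam _) (sb_mem_Lam _), ?_⟩
      have : (sb j + sb (sw j)) ∘ sw = sb j ∘ sw + sb (sw j) ∘ sw := rfl
      rw [this, sb_sw, sb_sw, sw_invol, add_comm]
    have h1 := h _ hfix
    have h2 := bq_sw x (sb (sw j))
    rw [sb_sw, sw_invol] at h2
    rw [bq, Matrix.mulVec_add, dotProduct_add] at h1
    rw [bq, add_dotProduct]
    simp only [bq] at h2
    linarith
  · have h1 := bq_sw x y
    rw [h, (mem_fixTau2.1 hy).2] at h1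
    simp only [bq, neg_dotProduct] at h1 ⊢
    linarith

/-! ### An `E8`-basis of the anti-invariant lattice -/

/-- Simple roots of `Ω₂ ≅ E8(2)`, in the Bourbaki numbering used by `e8mat`, written in terms of
the eight given generators of `Ω₂`. -/
def rootV : Fin 8 → Amb 22 :=
  ![(alV - gaV) + (beV - deV) + (fW 2 - hW 2),
    -(fW 3 - hW 3),
    -(fW 0 - hW 0),
    -(fW 2 - hW 2),
    -(fW 1 - hW 1),
    -(alV - gaV) + (fW 0 - hW 0) + (fW 1 - hW 1) + (fW 2 - hW 2) + (fW 3 - hW 3),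
    -(eW 2 - gW 2),
    (eW 0 - gW 0) + (eW 2 - gW 2)]

/-- The rows are linear forms that are integral on `Λ` and restrict on `Ω₂` to the coordinates with
respect to `rootV`. On anti-invariant vectors a row may be changed by multiples of `x_i + x_{i+8}` (for `i`
among the first eight coordinates) and of the last six coordinates; this freedom is what makes
integrality on all of `Λ` possible. -/
def coordM : Matrix (Fin 8) (Fin 22) ℚ :=
  !![0, 0, 0, -2, 0, 0, 0, 0, 0, 0, 0, 0, 0, 0, 0, 0, 0, 0, 0, 0, 0, 0;
     0, -1, 0, -2, 0, 0, 0, -1, 0, 0, 0, 0, 0, 0, 0, 0, -1, 0, 0, 0, -1, 0;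
     0, -1, 0, -2, -1, 0, 0, 0, 0, 0, 0, 1, 0, 0, 0, 0, 0, 0, 0, 0, -1, -1;
     0, -2, 0, -4, 0, 0, -1, 0, 0, 0, 0, 0, 0, 0, 0, 0, 0, 0, 0, 0, 0, 0;
     0, -2, 0, -2, 0, -1, 0, 0, 0, 0, 0, 1, 0, 0, 0, 0, -1, 0, 0, 0, 0, -1;
     0, -2, 0, -2, 0, 0, 0, 0, 0, 0, 0, 0, 0, 0, 0, 0, 0, 0, 0, 0, 0, 0;
     1, -1, -1, -1, 0, 0, 0, 0, 0, 0, 0, 0, 0, 0, 0, 0, 0, 0, 0, 0, 0, 0;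
     1, -1, 0, -1, 0, 0, 0, 0, 0, 0, 0, 0, 0, 0, 0, 0, 0, 0, 0, 0, 0, 0]

/-- It suffices to evaluate the forms on the generators of `Λ`. -/
lemma coord_integral {x : Amb 22} (hx : x ∈ Lam) (i : Fin 8) :
    ∃ k : ℤ, (k : ℚ) = (coordM *ᵥ x) i := by
  -- A rational number is an integer as soon as its denominator is `1`.
  have key : ∀ q : ℚ, q.den = 1 → ∃ k : ℤ, (k : ℚ) = q := fun q hq =>
    ⟨q.num, Rat.coe_int_num_of_den_eq_one hq⟩
  induction hx using Submodule.span_induction with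
  | mem x h =>
    apply key
    rcases h with ⟨j, rfl⟩ | h
    · revert i j
      decide +kernel
    · simp only [Set.mem_insert_iff, Set.mem_singleton_iff] at h
      rcases h with rfl | rfl | rfl | rfl | rfl | rfl | rfl | rfl <;> revert i <;> decide +kernel
  | zero => exact ⟨0, by simp⟩
  | add x y _ _ hx hy =>
    obtain ⟨a, ha⟩ := hx
    obtain ⟨b, hb⟩ := hy
    exact ⟨a + b, by rw [Matrix.mulVec_add]; simp [ha, hb]⟩
  | smul c x _ hx =>
    obtain ⟨a, ha⟩ := hx
    exact ⟨c * a, by rw [Matrix.mulVec_smul]; simp [ha]⟩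

lemma coord_rootV : ∀ i j, (coordM *ᵥ rootV j) i = if i = j then 1 else 0 := by decide +kernel

/-- On the vectors `v - τ² v`, the expansion in `rootV` with coordinates `coordM` is the identity;
it suffices to check this on the standard basis. -/
lemma expand_sub (v : Amb 22) :
    ∑ i, (coordM *ᵥ (v - v ∘ sw)) i • rootV i = v - v ∘ sw := by
  let f : Amb 22 →ₗ[ℚ] Amb 22 := LinearMap.id - LinearMap.funLeft ℚ ℚ sw
  let g : Amb 22 →ₗ[ℚ] Amb 22 := Fintype.linearCombination ℚ rootV ∘ₗ coordM.mulVecLin ∘ₗ f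
  have hgf : g = f := by
    refine (Pi.basisFun ℚ (Fin 22)).ext fun j => ?_
    have h : ∀ j k, (∑ i, (coordM *ᵥ (sb j - sb j ∘ sw)) i • rootV i) k
        = (sb j - sb j ∘ sw) k := by decide +kernel
    rw [Pi.basisFun_apply]
    exact funext (h j)
  exact LinearMap.congr_fun hgf v

lemma expand {x : Amb 22} (h : x ∘ sw = -x) : ∑ i, (coordM *ᵥ x) i • rootV i = x := by
  have h1 : (2⁻¹ : ℚ) • x - ((2⁻¹ : ℚ) • x) ∘ sw = x := by
    have : ((2⁻¹ : ℚ) • x) ∘ sw = (2⁻¹ : ℚ) • (x ∘ sw) := rfl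
    rw [this, h]
    module
  have h2 := expand_sub ((2⁻¹ : ℚ) • x)
  rwa [h1] at h2

lemma rootV_gram : ∀ i j, bq gramW (rootV i) (rootV j) = (((2 : ℤ) • e8mat) i j : ℤ) := by
  decide +kernel

/-! ### Comparison of the lattices -/

lemma ortho_le_span : orthoIn gramW Lam ↑FixTau2 ≤ Submodule.span ℤ (Set.range rootV) := by
  intro x hx
  obtain ⟨hL, hs⟩ := mem_ortho_iff.1 hx
  choose k hk using coord_integral hL
  rw [← expand hs]
  refine sum_mem fun i _ => ?_
  rw [← hk i, Int.cast_smul_eq_zsmul]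
  exact Submodule.smul_mem _ _ (Submodule.subset_span ⟨i, rfl⟩)

lemma span_le_Om2 : Submodule.span ℤ (Set.range rootV) ≤ Om2 := by
  have hA : alV - gaV ∈ Om2 := Submodule.subset_span (by simp)
  have hB : beV - deV ∈ Om2 := Submodule.subset_span (by simp)
  have he0 : eW 0 - gW 0 ∈ Om2 := Submodule.subset_span (by simp)
  have he2 : eW 2 - gW 2 ∈ Om2 := Submodule.subset_span (by simp)
  have hf0 : fW 0 - hW 0 ∈ Om2 := Submodule.subset_span (by simp)
  have hf1 : fW 1 - hW 1 ∈ Om2 := Submodule.subset_span (by simp)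
  have hf2 : fW 2 - hW 2 ∈ Om2 := Submodule.subset_span (by simp)
  have hf3 : fW 3 - hW 3 ∈ Om2 := Submodule.subset_span (by simp)
  rw [Submodule.span_le]
  rintro _ ⟨i, rfl⟩
  fin_cases i
  · exact add_mem (add_mem hA hB) hf2
  · exact neg_mem hf3
  · exact neg_mem hf0
  · exact neg_mem hf2
  · exact neg_mem hf1
  · exact add_mem (add_mem (add_mem (add_mem (neg_mem hA) hf0) hf1) hf2) hf3
  · exact neg_mem he2
  · exact add_mem he0 he2

lemma Om2_le_ortho : Om2 ≤ orthoIn gramW Lam ↑FixTau2 := by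
  have hL : ∀ v ∈ ({chiV, alV, beV, gaV, deV, epV, zeV, etV} : Set (Amb 22)), v ∈ Lam :=
    fun v hv => Submodule.subset_span (Or.inr hv)
  rw [Om2, Submodule.span_le]
  intro x hx
  simp only [Set.mem_insert_iff, Set.mem_singleton_iff] at hx
  refine mem_ortho_iff.2 ⟨?_, ?_⟩
  · rcases hx with rfl | rfl | rfl | rfl | rfl | rfl | rfl | rfl
    · exact sub_mem (hL _ (by simp)) (hL _ (by simp))
    · exact sub_mem (hL _ (by simp)) (hL _ (by simp))
    all_goals exact sub_mem (sb_mem_Lam _) (sb_mem_Lam _)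
  · ext k
    rcases hx with rfl | rfl | rfl | rfl | rfl | rfl | rfl | rfl <;> revert k <;> decide +kernel

lemma Om2_eq_ortho : Om2 = orthoIn gramW Lam ↑FixTau2 :=
  le_antisymm Om2_le_ortho (ortho_le_span.trans span_le_Om2)

lemma Om2_eq_span : Om2 = Submodule.span ℤ (Set.range rootV) :=
  le_antisymm (Om2_le_ortho.trans ortho_le_span) span_le_Om2

lemma rootV_linearIndependent : LinearIndependent ℤ rootV := by
  rw [Fintype.linearIndependent_iff]
  intro c hc i
  have h : (coordM *ᵥ ∑ j, c j • rootV j) i = c i := by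
    simp only [Matrix.mulVec_sum, Matrix.mulVec_smul, Finset.sum_apply, Pi.smul_apply, coord_rootV]
    simp
  rw [hc] at h
  simpa using h.symm

lemma bq_combination (c d : Fin 8 → ℤ) :
    bq gramW (∑ i, c i • rootV i) (∑ j, d j • rootV j) = (bz ((2 : ℤ) • e8mat) c d : ℤ) := by
  have h : bq gramW (∑ i, c i • rootV i) (∑ j, d j • rootV j)
      = ∑ i, ∑ j, (c i : ℚ) * (d j * bq gramW (rootV i) (rootV j)) := by
    simp only [bq, sum_dotProduct, dotProduct_sum, Matrix.mulVec_sum, Matrix.mulVec_smul,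
      smul_dotProduct, dotProduct_smul]
    simp only [zsmul_eq_mul, Finset.mul_sum]
    rw [Finset.sum_comm]
    refine Finset.sum_congr rfl fun i _ => Finset.sum_congr rfl fun j _ => ?_
    ring
  simp only [h, rootV_gram, bz, dotProduct, Matrix.mulVec, Finset.mul_sum]
  push_cast
  refine Finset.sum_congr rfl fun i _ => Finset.sum_congr rfl fun j _ => ?_
  ring

/-- `Ω₂` (the span of the listed eight elements) is isometric to `E8(2)` and
equals the orthogonal complement in `Λ` of the invariant lattice `Λ^{τ²}`. -/
theorem statement5 :
    LatIsomToZ gramW Om2 ((2 : ℤ) • e8mat) ∧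
    Om2 = orthoIn gramW Lam ↑FixTau2 := by
  refine ⟨?_, Om2_eq_ortho⟩
  rw [Om2_eq_span]
  let b := Module.Basis.span rootV_linearIndependent
  have hb : ∀ x : Submodule.span ℤ (Set.range rootV), (x : Amb 22) = ∑ i, b.equivFun x i • rootV i := fun x => by
    conv_lhs => rw [← b.sum_equivFun x]
    simp [b, Module.Basis.span_apply]
  refine ⟨b.equivFun, fun x y => ?_⟩
  rw [hb x, hb y, bq_combination]

end K3Paper
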